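/- There exists a constant c > 0 such that for any arrangement of n closed geodesics on the flat 2-torus with f complementary regions satisfying f ≤ c·n^{6/5}, the maximal number m of pairwise parallel geodesics in the arrangement satisfies m ≥ n − f/n + O(1), i.e., there is a constant C with m ≥ n − f/n − C for all n. -/

import Mathlib

noncomputable section

/-- The flat two-dimensional torus `ℝ²/ℤ²`. -/
abbrev Torus : Type := AddCircle (1 : ℝ) × AddCircle (1 : ℝ)

/-- The quotient projection `ℝ² → ℝ²/ℤ²`. -/
def torusProj (v : ℝ × ℝ) : Torus :=
  ((v.1 : AddCircle (1 : ℝ)), (v.2 : AddCircle (1 : ℝ)))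

/-- A vector `(p, q) ∈ ℤ²` is primitive if `gcd(p, q) = 1`. -/
def IsPrimitive (v : ℤ × ℤ) : Prop := Int.gcd v.1 v.2 = 1

/-- The closed geodesic on the torus through (the class of) `b` in direction `v`. -/
def geodesic (b : ℝ × ℝ) (v : ℤ × ℤ) : Set Torus :=
  Set.range (fun t : ℝ => torusProj (b.1 + t * (v.1 : ℝ), b.2 + t * (v.2 : ℝ)))

/-- The number of connected components of the complement of `S`. -/
def regionCount {X : Type*} [TopologicalSpace X] (S : Set X) : ℕ :=
  Nat.card (ConnectedComponents ↥(Sᶜ))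

/-- An arrangement of `n` distinct closed geodesics, given by base points `b`
and primitive direction vectors `v`. -/
def IsArrangement {n : ℕ} (b : Fin n → ℝ × ℝ) (v : Fin n → ℤ × ℤ) : Prop :=
  (∀ i, IsPrimitive (v i)) ∧ Function.Injective (fun i => geodesic (b i) (v i))

/-- Two geodesics are parallel iff their homology classes agree up to sign. -/
def Parallel (v w : ℤ × ℤ) : Prop := v = w ∨ v = -w

/-!
Lift the arrangement to `ℝ²`: the lifts of each geodesic are the integer level lines of an affine
function, so the floors of these functions, taken modulo the action of `ℤ²`, label the regions
faithfully. Orient the geodesics so that every one transverse to a fixed class `u` crosses it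
positively. For increasing homeomorphisms of `ℝ` no two of which are integral at the same time,
the sum of the floors moves by unit steps. Hence, by first sweeping a line parallel to `u` and then
moving along a generic such line, the sums of the floors over the `a` geodesics parallel to `u` and
over the transverse ones can be given arbitrary values. The action of `ℤ²` changes the first sum by
multiples of `a` and, when it fixes the first, the second by multiples of `d = ∑ i, |vᵢ ∧ u|`.
Hence `a * d ≤ f`.

Since `n - a ≤ d`, it follows that `a * (n - a) ≤ f` for every class. If `f ≤ c * n ^ (6/5)` and the
largest class had `a < n / 2`, this would force `a ≤ 2 * c * n ^ (1/5)`. But for two non-parallel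
classes `p` and `q`, a vector is determined by its two intersection numbers with `p` and `q`, whose
sums over the arrangement are at most `f`; so at least half of the geodesics have both numbers of
order `n ^ (1/5)`, and these have only `O(n ^ (2/5))` directions. Hence
`n ≲ a * n ^ (2/5) ≲ c * n ^ (3/5)`, which fails for small `c`. Therefore `a ≥ n / 2`, and then
`a * (n - a) ≤ f` yields `n - a ≤ f / n + 1`.
-/

namespace TorusGeodesic

open Set Filter Topology

section Wedge

variable {R : Type*} [CommRing R]

/-- The determinant `v ∧ w = v₁w₂ - v₂w₁` of two plane vectors, as a linear form in `w`. For
homology classes `v`, `w` it is the algebraic intersection number. -/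
def wedge (v : R × R) : R × R →ₗ[R] R :=
  v.1 • LinearMap.snd R R R - v.2 • LinearMap.fst R R R

lemma wedge_apply (v w : R × R) : wedge v w = v.1 * w.2 - v.2 * w.1 := by
  simp [wedge]

lemma wedge_self (v : R × R) : wedge v v = 0 := by
  rw [wedge_apply]; ring

lemma wedge_swap (v w : R × R) : wedge w v = -wedge v w := by
  simp only [wedge_apply]; ring

lemma wedge_neg_left (v w : R × R) : wedge (-v) w = -wedge v w := by
  simp only [wedge_apply, Prod.fst_neg, Prod.snd_neg]; ring

lemma eq_wedge_smul_sub_wedge_smul {v e : R × R} (h : wedge v e = 1) (x : R × R) :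
    x = wedge v x • e - wedge e x • v := by
  rw [wedge_apply] at h
  ext
  · simp only [wedge_apply, Prod.fst_sub, Prod.smul_fst, smul_eq_mul]
    linear_combination -x.1 * h
  · simp only [wedge_apply, Prod.snd_sub, Prod.smul_snd, smul_eq_mul]
    linear_combination -x.2 * h

lemma eq_of_wedge_eq_wedge [IsDomain R] {p q x y : R × R} (hpq : wedge p q ≠ 0)
    (hp : wedge p x = wedge p y) (hq : wedge q x = wedge q y) : x = y := by
  simp only [wedge_apply] at hpq hp hq
  ext <;> apply mul_left_cancel₀ hpq
  · linear_combination q.1 * hp - p.1 * hq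
  · linear_combination q.2 * hp - p.2 * hq

end Wedge

section Homology

lemma isPrimitive_neg {v : ℤ × ℤ} (hv : IsPrimitive v) : IsPrimitive (-v) := by
  simpa [IsPrimitive] using hv

lemma exists_wedge_eq_one {v : ℤ × ℤ} (hv : IsPrimitive v) : ∃ e, wedge v e = 1 := by
  obtain ⟨r, s, hrs⟩ := Int.isCoprime_iff_gcd_eq_one.2 hv
  exact ⟨(-s, r), by rw [wedge_apply]; linear_combination hrs⟩

lemma eq_smul_of_wedge_eq_zero {u z : ℤ × ℤ} (hu : IsPrimitive u) (h : wedge u z = 0) :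
    ∃ k : ℤ, z = k • u := by
  obtain ⟨e, he⟩ := exists_wedge_eq_one hu
  exact ⟨-wedge e z, by simpa [h] using eq_wedge_smul_sub_wedge_smul he z⟩

lemma parallel_iff_wedge_eq_zero {v w : ℤ × ℤ} (hv : IsPrimitive v) (hw : IsPrimitive w) :
    Parallel v w ↔ wedge v w = 0 := by
  constructor
  · rintro (rfl | rfl)
    · exact wedge_self v
    · rw [wedge_neg_left, wedge_self, neg_zero]
  · intro h
    obtain ⟨k, rfl⟩ := eq_smul_of_wedge_eq_zero hv h
    obtain ⟨e, he⟩ := exists_wedge_eq_one hw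
    have hk : k * -wedge e v = 1 := by
      rw [wedge_swap, map_smul, smul_eq_mul] at he
      linarith
    rcases Int.isUnit_iff.1 (IsUnit.of_mul_eq_one _ hk) with rfl | rfl <;> simp [Parallel]

/-- The geometric intersection number of two homology classes: the number of points in which
non-parallel geodesics of these classes meet. -/
def intersectionNumber (v w : ℤ × ℤ) : ℕ := (wedge v w).natAbs

lemma intersectionNumber_comm (v w : ℤ × ℤ) : intersectionNumber v w = intersectionNumber w v := by
  rw [intersectionNumber, wedge_swap, Int.natAbs_neg, intersectionNumber]

lemma intersectionNumber_neg_left (v w : ℤ × ℤ) :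
    intersectionNumber (-v) w = intersectionNumber v w := by
  rw [intersectionNumber, wedge_neg_left, Int.natAbs_neg, intersectionNumber]

lemma intersectionNumber_eq_zero_iff {v w : ℤ × ℤ} (hv : IsPrimitive v) (hw : IsPrimitive w) :
    intersectionNumber v w = 0 ↔ Parallel v w := by
  rw [intersectionNumber, Int.natAbs_eq_zero, parallel_iff_wedge_eq_zero hv hw]

end Homology

section Geodesic

/-- The inclusion `ℤ² ⊂ ℝ²`. -/
def intVec : ℤ × ℤ →+ ℝ × ℝ := (Int.castAddHom ℝ).prodMap (Int.castAddHom ℝ)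

lemma wedge_intVec (v w : ℤ × ℤ) : wedge (intVec v) (intVec w) = (wedge v w : ℤ) := by
  simp [wedge_apply, intVec]

lemma torusProj_eq_torusProj_iff {x y : ℝ × ℝ} :
    torusProj x = torusProj y ↔ ∃ z, y = x + intVec z := by
  have coe_eq_coe_iff (s t : ℝ) : (s : AddCircle (1 : ℝ)) = t ↔ ∃ k : ℤ, t = s + k := by
    simp only [QuotientAddGroup.eq, AddSubgroup.mem_zmultiples_iff, zsmul_one, neg_add_eq_sub,
      eq_sub_iff_add_eq', eq_comm (a := t)]
  simp [torusProj, coe_eq_coe_iff, Prod.ext_iff, intVec]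

lemma torusProj_add_intVec (x : ℝ × ℝ) (z : ℤ × ℤ) : torusProj (x + intVec z) = torusProj x :=
  (torusProj_eq_torusProj_iff.2 ⟨z, rfl⟩).symm

lemma continuous_torusProj : Continuous torusProj :=
  (AddCircle.continuous_mk' 1).prodMap (AddCircle.continuous_mk' 1)

lemma isOpenMap_torusProj : IsOpenMap torusProj :=
  QuotientAddGroup.isOpenMap_coe.prodMap QuotientAddGroup.isOpenMap_coe

lemma torusProj_surjective : Function.Surjective torusProj :=
  QuotientAddGroup.mk_surjective.prodMap QuotientAddGroup.mk_surjective

lemma exists_mem_Icc_torusProj_eq (y : Torus) :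
    ∃ x ∈ Icc (0 : ℝ × ℝ) 1, torusProj x = y := by
  obtain ⟨x, rfl⟩ := torusProj_surjective y
  refine ⟨(Int.fract x.1, Int.fract x.2), ?_, ?_⟩
  · simp [Prod.le_def, Int.fract_nonneg, (Int.fract_lt_one _).le]
  · refine torusProj_eq_torusProj_iff.2 ⟨(⌊x.1⌋, ⌊x.2⌋), ?_⟩
    simp [intVec, Int.fract_add_floor]

lemma geodesic_eq_range (b : ℝ × ℝ) (v : ℤ × ℤ) :
    geodesic b v = range fun t : ℝ => torusProj (b + t • intVec v) := rfl

lemma geodesic_neg (b : ℝ × ℝ) (v : ℤ × ℤ) : geodesic b (-v) = geodesic b v := by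
  simp only [geodesic_eq_range, map_neg, smul_neg, ← neg_smul]
  exact neg_surjective.range_comp fun t : ℝ => torusProj (b + t • intVec v)

lemma torusProj_add (x y : ℝ × ℝ) : torusProj (x + y) = torusProj x + torusProj y := rfl

lemma geodesic_eq_of_torusProj_mem {b x : ℝ × ℝ} {v : ℤ × ℤ} (hx : torusProj x ∈ geodesic b v) :
    geodesic b v = geodesic x v := by
  obtain ⟨t, ht⟩ := hx
  change torusProj (b + t • intVec v) = torusProj x at ht
  have translate (s : ℝ) :
      torusProj (x + s • intVec v) = torusProj (b + (t + s) • intVec v) := by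
    rw [torusProj_add, ← ht, ← torusProj_add, add_assoc, add_smul]
  simp only [geodesic_eq_range, translate]
  exact ((add_left_surjective t).range_comp fun s : ℝ => torusProj (b + s • intVec v)).symm

lemma geodesic_eq_of_parallel_of_mem {b b' x : ℝ × ℝ} {v v' : ℤ × ℤ} (h : Parallel v v')
    (hx : torusProj x ∈ geodesic b v) (hx' : torusProj x ∈ geodesic b' v') :
    geodesic b v = geodesic b' v' := by
  rw [geodesic_eq_of_torusProj_mem hx, geodesic_eq_of_torusProj_mem hx']
  rcases h with rfl | rfl
  · rfl
  · exact geodesic_neg x v'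

/-- The affine function on `ℝ²` whose integer level lines are the lifts of `geodesic b v`. -/
def height (b : ℝ × ℝ) (v : ℤ × ℤ) (x : ℝ × ℝ) : ℝ := wedge (intVec v) (x - b)

lemma height_add_intVec (b : ℝ × ℝ) (v : ℤ × ℤ) (x : ℝ × ℝ) (z : ℤ × ℤ) :
    height b v (x + intVec z) = height b v x + (wedge v z : ℤ) := by
  rw [height, height, add_sub_right_comm, map_add, wedge_intVec]

lemma continuous_height (b : ℝ × ℝ) (v : ℤ × ℤ) : Continuous (height b v) :=
  (wedge (intVec v)).continuous_of_finiteDimensional.comp (continuous_id.sub continuous_const)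

lemma torusProj_mem_geodesic_iff {b x : ℝ × ℝ} {v : ℤ × ℤ} (hv : IsPrimitive v) :
    torusProj x ∈ geodesic b v ↔ height b v x ∈ range ((↑) : ℤ → ℝ) := by
  constructor
  · rintro ⟨t, ht⟩
    change torusProj (b + t • intVec v) = torusProj x at ht
    obtain ⟨z, rfl⟩ := torusProj_eq_torusProj_iff.1 ht
    refine ⟨wedge v z, ?_⟩
    rw [height_add_intVec, height, add_sub_cancel_left, map_smul, wedge_self, smul_zero, zero_add]
  · rintro ⟨k, hk⟩
    obtain ⟨e, he⟩ := exists_wedge_eq_one hv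
    have he' : wedge (intVec v) (intVec e) = 1 := by rw [wedge_intVec, he, Int.cast_one]
    refine ⟨-wedge (intVec e) (x - b), torusProj_eq_torusProj_iff.2 ⟨k • e, ?_⟩⟩
    have hx := eq_wedge_smul_sub_wedge_smul he' (x - b)
    rw [show wedge (intVec v) (x - b) = k from hk.symm] at hx
    rw [map_zsmul, ← Int.cast_smul_eq_zsmul ℝ]
    change x = b + -wedge (intVec e) (x - b) • intVec v + (k : ℝ) • intVec e
    rw [neg_smul, add_assoc, neg_add_eq_sub, ← hx, add_sub_cancel]

lemma countable_setOf_mem_geodesic_inter {b b' : ℝ × ℝ} {v v' : ℤ × ℤ} (hv : IsPrimitive v)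
    (hv' : IsPrimitive v') (h : geodesic b v ≠ geodesic b' v') :
    {x | torusProj x ∈ geodesic b v ∧ torusProj x ∈ geodesic b' v'}.Countable := by
  by_cases hpar : Parallel v v'
  · convert countable_empty
    exact eq_empty_of_forall_notMem fun x hx =>
      h (geodesic_eq_of_parallel_of_mem hpar hx.1 hx.2)
  · have hw : wedge (intVec v) (intVec v') ≠ 0 := by
      rw [wedge_intVec, Int.cast_ne_zero]
      exact mt (parallel_iff_wedge_eq_zero hv hv').2 hpar
    have hinj : Function.Injective fun x => (height b v x, height b' v' x) := by
      intro x y hxy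
      simp only [height, map_sub, Prod.mk.injEq, sub_left_inj] at hxy
      exact eq_of_wedge_eq_wedge hw hxy.1 hxy.2
    refine (((countable_range ((↑) : ℤ → ℝ)).prod (countable_range ((↑) : ℤ → ℝ))).preimage
      hinj).mono fun x hx => ?_
    exact ⟨(torusProj_mem_geodesic_iff hv).1 hx.1, (torusProj_mem_geodesic_iff hv').1 hx.2⟩

end Geodesic

section Cells

lemma mem_Ioo_intCast_iff {y : ℝ} {k : ℤ} :
    y ∈ Ioo (k : ℝ) (k + 1) ↔ y ∉ range ((↑) : ℤ → ℝ) ∧ ⌊y⌋ = k := by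
  constructor
  · intro hy
    have hk : ⌊y⌋ = k := Int.floor_eq_iff.2 ⟨hy.1.le, hy.2⟩
    refine ⟨?_, hk⟩
    rintro ⟨l, rfl⟩
    rw [Int.floor_intCast] at hk
    exact hy.1.ne (by rw [hk])
  · rintro ⟨hy, rfl⟩
    exact ⟨(Int.floor_le y).lt_of_ne fun h => hy ⟨_, h⟩, Int.lt_floor_add_one y⟩

variable {ι : Type*} (b : ι → ℝ × ℝ) (v : ι → ℤ × ℤ)

/-- The lifts of each geodesic cut `ℝ²` into strips; `pattern b v x` records for every geodesic
the strip that contains `x`. -/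
def pattern (x : ℝ × ℝ) : ι → ℤ := fun i => ⌊height (b i) (v i) x⌋

/-- The open convex polygon, possibly empty, of the plane arrangement with pattern `c`. -/
def cell (c : ι → ℤ) : Set (ℝ × ℝ) := {x | ∀ i, height (b i) (v i) x ∈ Ioo (c i : ℝ) (c i + 1)}

/-- The homomorphism that sends a deck transformation `z ∈ ℤ²` to the change of pattern it
causes. -/
def patternShift : ℤ × ℤ →ₗ[ℤ] ι → ℤ := LinearMap.pi fun i => wedge (v i)

/-- The pattern of any lift of a point of the torus, modulo deck transformations. -/
def torusPattern (y : Torus) : (ι → ℤ) ⧸ LinearMap.range (patternShift v) :=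
  Submodule.Quotient.mk (pattern b v (Function.surjInv torusProj_surjective y))

variable {b v}

lemma pattern_add_intVec (x : ℝ × ℝ) (z : ℤ × ℤ) :
    pattern b v (x + intVec z) = pattern b v x + patternShift v z := by
  ext i
  simp only [pattern, height_add_intVec, Int.floor_add_intCast, patternShift, Pi.add_apply,
    LinearMap.pi_apply]

lemma torusPattern_torusProj (x : ℝ × ℝ) :
    torusPattern b v (torusProj x) = Submodule.Quotient.mk (pattern b v x) := by
  obtain ⟨z, hz⟩ := torusProj_eq_torusProj_iff.1
    (Function.surjInv_eq torusProj_surjective (torusProj x))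
  rw [torusPattern, eq_comm, Submodule.Quotient.eq]
  refine ⟨z, ?_⟩
  nth_rw 1 [hz]
  rw [pattern_add_intVec, add_sub_cancel_left]

lemma mem_cell_iff (hprim : ∀ i, IsPrimitive (v i)) {c : ι → ℤ} {x : ℝ × ℝ} :
    x ∈ cell b v c ↔ torusProj x ∈ (⋃ i, geodesic (b i) (v i))ᶜ ∧ pattern b v x = c := by
  simp only [cell, mem_ofPred_eq, mem_Ioo_intCast_iff, mem_compl_iff, mem_iUnion, not_exists,
    torusProj_mem_geodesic_iff (hprim _), forall_and, funext_iff, pattern]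

lemma isOpen_cell [Finite ι] (c : ι → ℤ) : IsOpen (cell b v c) := by
  simp only [cell, ofPred_forall]
  exact isOpen_iInter_of_finite fun i => isOpen_Ioo.preimage (continuous_height _ _)

lemma convex_cell (c : ι → ℤ) : Convex ℝ (cell b v c) := by
  simp only [cell, ofPred_forall]
  refine convex_iInter fun i => ?_
  have key : {x | height (b i) (v i) x ∈ Ioo (c i : ℝ) (c i + 1)} =
      (fun x => x - b i) ⁻¹' (wedge (intVec (v i)) ⁻¹' Ioo (c i : ℝ) (c i + 1)) := rfl
  rw [key]
  simpa only [sub_eq_add_neg] using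
    ((convex_Ioo _ _).linear_preimage (wedge (intVec (v i)))).translate_preimage_left (-b i)

lemma isLocallyConstant_torusPattern [Finite ι] (hprim : ∀ i, IsPrimitive (v i)) :
    IsLocallyConstant ((⋃ i, geodesic (b i) (v i))ᶜ.domRestrict (torusPattern b v)) := by
  rw [IsLocallyConstant.iff_exists_open]
  rintro ⟨y, hy⟩
  obtain ⟨x, rfl⟩ := torusProj_surjective y
  refine ⟨Subtype.val ⁻¹' (torusProj '' cell b v (pattern b v x)),
    (isOpenMap_torusProj _ (isOpen_cell _)).preimage continuous_subtype_val,
    ⟨x, (mem_cell_iff hprim).2 ⟨hy, rfl⟩, rfl⟩, ?_⟩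
  rintro ⟨-, -⟩ ⟨x', hx', rfl⟩
  simp only [domRestrict_apply, torusPattern_torusProj, ((mem_cell_iff hprim).1 hx').2]

lemma mem_connectedComponent_of_torusPattern_eq (hprim : ∀ i, IsPrimitive (v i))
    {y y' : ↥(⋃ i, geodesic (b i) (v i))ᶜ} (h : torusPattern b v y = torusPattern b v y') :
    y' ∈ connectedComponent y := by
  obtain ⟨y, hy⟩ := y
  obtain ⟨y', hy'⟩ := y'
  obtain ⟨x, rfl⟩ := torusProj_surjective y
  obtain ⟨x', rfl⟩ := torusProj_surjective y'
  simp only [torusPattern_torusProj, Submodule.Quotient.eq] at h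
  obtain ⟨z, hz⟩ := h
  set s := cell b v (pattern b v x)
  have hs : torusProj '' s ⊆ (⋃ i, geodesic (b i) (v i))ᶜ := by
    rintro - ⟨w, hw, rfl⟩
    exact ((mem_cell_iff hprim).1 hw).1
  have hpre : IsPreconnected (Subtype.val ⁻¹' (torusProj '' s) :
      Set ↥(⋃ i, geodesic (b i) (v i))ᶜ) := by
    rw [← IsInducing.subtypeVal.isPreconnected_image, Subtype.image_preimage_coe,
      inter_eq_right.2 hs]
    exact (convex_cell _).isPreconnected.image _ continuous_torusProj.continuousOn
  refine hpre.subset_connectedComponent ⟨x, (mem_cell_iff hprim).2 ⟨hy, rfl⟩, rfl⟩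
    ⟨x' + intVec z, (mem_cell_iff hprim).2 ⟨?_, ?_⟩, torusProj_add_intVec x' z⟩
  · rwa [torusProj_add_intVec]
  · rw [pattern_add_intVec, hz, add_sub_cancel]

lemma natCard_connectedComponents_eq_ncard_range {X Q : Type*} [TopologicalSpace X] {F : X → Q}
    (hF : IsLocallyConstant F) (hfib : ∀ x y, F x = F y → y ∈ connectedComponent x) :
    Nat.card (ConnectedComponents X) = (range F).ncard := by
  let G : ConnectedComponents X → Q := Quotient.lift (s := connectedComponentSetoid X) F
    fun x y hxy => (hF.apply_eq_of_isPreconnected isPreconnected_connectedComponent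
      (connectedComponent_eq_iff_mem.1 hxy) mem_connectedComponent)
  have hG : Function.Injective G := by
    rintro ⟨x⟩ ⟨y⟩ hxy
    exact (ConnectedComponents.coe_eq_coe'.2 (hfib y x hxy.symm))
  have hrange : range G = range F := (ConnectedComponents.surjective_coe.range_comp G).symm
  rw [← hrange, ← Nat.card_range_of_injective hG, Nat.card_coe_set_eq]

theorem regionCount_eq_ncard_torusPattern [Finite ι] (hprim : ∀ i, IsPrimitive (v i)) :
    regionCount (⋃ i, geodesic (b i) (v i)) =
      (torusPattern b v '' (⋃ i, geodesic (b i) (v i))ᶜ).ncard := by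
  rw [← range_domRestrict]
  exact natCard_connectedComponents_eq_ncard_range (isLocallyConstant_torusPattern hprim)
    fun _ _ => mem_connectedComponent_of_torusPattern_eq hprim

lemma finite_pattern_image [Finite ι] {K : Set (ℝ × ℝ)} (hK : IsCompact K) :
    (pattern b v '' K).Finite := by
  have hbdd (i : ι) : ∃ B, ∀ x ∈ K, |height (b i) (v i) x| ≤ B :=
    (hK.exists_bound_of_continuousOn (continuous_height (b i) (v i)).continuousOn)
  choose B hB using hbdd
  refine (Set.Finite.pi' fun i => finite_Icc ⌊-B i⌋ ⌊B i⌋).subset ?_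
  rintro - ⟨x, hx, rfl⟩ i
  exact ⟨Int.floor_mono (abs_le.1 (hB i x hx)).1, Int.floor_mono (abs_le.1 (hB i x hx)).2⟩

variable (b v) in
lemma finite_range_torusPattern [Finite ι] : (range (torusPattern b v)).Finite := by
  refine ((finite_pattern_image (b := b) (v := v) (isCompact_Icc (a := 0) (b := 1))).image
    Submodule.Quotient.mk).subset ?_
  rintro - ⟨y, rfl⟩
  obtain ⟨x, hx, rfl⟩ := exists_mem_Icc_torusProj_eq y
  exact ⟨_, mem_image_of_mem _ hx, (torusPattern_torusProj x).symm⟩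

theorem natCard_le_regionCount [Finite ι] (hprim : ∀ i, IsPrimitive (v i)) {J : Type*}
    {x : J → ℝ × ℝ} (hx : ∀ j, torusProj (x j) ∈ (⋃ i, geodesic (b i) (v i))ᶜ)
    (hinj : ∀ j j' z, pattern b v (x j) = pattern b v (x j') + patternShift v z → j = j') :
    Nat.card J ≤ regionCount (⋃ i, geodesic (b i) (v i)) := by
  have hJ : Function.Injective fun j => torusPattern b v (torusProj (x j)) := by
    intro j j' h
    simp only [torusPattern_torusProj, Submodule.Quotient.eq] at h
    obtain ⟨z, hz⟩ := h
    exact hinj j j' z (by rw [hz, add_sub_cancel])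
  rw [regionCount_eq_ncard_torusPattern hprim, ← Nat.card_range_of_injective hJ,
    Nat.card_coe_set_eq]
  refine ncard_le_ncard (range_subset_iff.2 fun j => mem_image_of_mem _ (hx j)) ?_
  exact (finite_range_torusPattern b v).subset (image_subset_range _ _)

end Cells

section UnitJumps

lemma eventually_nhdsGT_floor_eq (x : ℝ) :
    ∀ᶠ y in 𝓝[>] x, y ∉ range ((↑) : ℤ → ℝ) ∧ ⌊y⌋ = ⌊x⌋ := by
  filter_upwards [Ioo_mem_nhdsGT (Int.lt_floor_add_one x)] with y hy
  exact mem_Ioo_intCast_iff.1 ⟨(Int.floor_le x).trans_lt hy.1, hy.2⟩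

lemma ceil_add_ite_eq_floor_add_one (x : ℝ) [Decidable (x ∈ range ((↑) : ℤ → ℝ))] :
    ⌈x⌉ + (if x ∈ range ((↑) : ℤ → ℝ) then 1 else 0) = ⌊x⌋ + 1 := by
  split_ifs with hx
  · obtain ⟨k, rfl⟩ := hx
    rw [Int.ceil_intCast, Int.floor_intCast]
  · obtain ⟨hlt, hgt⟩ := mem_Ioo_intCast_iff.2 ⟨hx, rfl⟩
    rw [add_zero]
    exact Int.ceil_eq_iff.2 ⟨by push_cast; linarith, by push_cast; exact hgt.le⟩

variable {κ : Type*} [Fintype κ]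

lemma isOpen_setOf_sum_floor_lt {X : Type*} [TopologicalSpace X] {f : κ → X → ℝ}
    (hf : ∀ i, Continuous (f i)) (m : ℤ) : IsOpen {t | ∑ i, ⌊f i t⌋ < m} := by
  refine isOpen_iff_mem_nhds.2 fun t ht => ?_
  have hlt : ∀ᶠ s in 𝓝 t, ∀ i, f i s < ⌊f i t⌋ + 1 := eventually_all.2 fun i =>
    (hf i).continuousAt.eventually (gt_mem_nhds (Int.lt_floor_add_one _))
  filter_upwards [hlt] with s hs
  refine (Finset.sum_le_sum fun i _ => ?_).trans_lt ht
  exact Int.lt_add_one_iff.1 (Int.floor_lt.2 (by exact_mod_cast hs i))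

lemma isOpen_setOf_lt_sum_ceil {X : Type*} [TopologicalSpace X] {f : κ → X → ℝ}
    (hf : ∀ i, Continuous (f i)) (m : ℤ) : IsOpen {t | m < ∑ i, ⌈f i t⌉} := by
  simpa only [Int.floor_neg, Finset.sum_neg_distrib, neg_lt_neg_iff] using
    isOpen_setOf_sum_floor_lt (f := fun i t => -f i t) (fun i => (hf i).neg) (-m)

lemma sum_floor_add_card_le_sum_ceil_add_one {x : κ → ℝ}
    (hx : {i | x i ∈ range ((↑) : ℤ → ℝ)}.Subsingleton) :
    ∑ i, ⌊x i⌋ + Fintype.card κ ≤ ∑ i, ⌈x i⌉ + 1 := by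
  classical
  have hone : (({i | x i ∈ range ((↑) : ℤ → ℝ)} : Finset κ).card : ℤ) ≤ 1 := by
    exact_mod_cast Finset.card_le_one.2 fun i hi j hj =>
      hx (Finset.mem_filter.1 hi).2 (Finset.mem_filter.1 hj).2
  calc ∑ i, ⌊x i⌋ + (Fintype.card κ : ℤ) = ∑ i, (⌊x i⌋ + 1) := by
        simp [Finset.sum_add_distrib]
    _ = ∑ i, ⌈x i⌉ + ({i | x i ∈ range ((↑) : ℤ → ℝ)} : Finset κ).card := by
        simp only [← ceil_add_ite_eq_floor_add_one, Finset.sum_add_distrib, Finset.sum_boole]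
    _ ≤ ∑ i, ⌈x i⌉ + 1 := by gcongr

variable [Nonempty κ]

lemma exists_sum_floor_lt {f : κ → ℝ → ℝ} (hf : ∀ i, Tendsto (f i) atBot atBot) (m : ℤ) :
    ∃ t, ∑ i, ⌊f i t⌋ < m := by
  have hlt : ∀ᶠ t in atBot, ∀ i, f i t < (min m 0 : ℤ) :=
    eventually_all.2 fun i => (hf i).eventually_lt_atBot _
  obtain ⟨t, ht⟩ := hlt.exists
  refine ⟨t, ?_⟩
  calc ∑ i, ⌊f i t⌋ < ∑ _i : κ, min m 0 :=
        Finset.sum_lt_sum_of_nonempty Finset.univ_nonempty fun i _ => Int.floor_lt.2 (ht i)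
    _ = Fintype.card κ * min m 0 := by simp
    _ ≤ 1 * min m 0 := mul_le_mul_of_nonpos_right (by exact_mod_cast Fintype.card_pos)
        (min_le_right _ _)
    _ ≤ m := by simp

lemma exists_lt_sum_ceil {f : κ → ℝ → ℝ} (hf : ∀ i, Tendsto (f i) atTop atTop) (m : ℤ) :
    ∃ t, m < ∑ i, ⌈f i t⌉ := by
  have hlt : ∀ᶠ t in atTop, ∀ i, (max m 0 : ℤ) < f i t :=
    eventually_all.2 fun i => (hf i).eventually_gt_atTop _
  obtain ⟨t, ht⟩ := hlt.exists
  refine ⟨t, ?_⟩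
  calc m ≤ 1 * max m 0 := by simp
    _ ≤ Fintype.card κ * max m 0 := mul_le_mul_of_nonneg_right
        (by exact_mod_cast Fintype.card_pos) (le_max_right _ _)
    _ = ∑ _i : κ, max m 0 := by simp
    _ < ∑ i, ⌈f i t⌉ :=
        Finset.sum_lt_sum_of_nonempty Finset.univ_nonempty fun i _ => Int.lt_ceil.2 (ht i)

theorem exists_eventually_sum_floor_eq (f : κ → ℝ ≃o ℝ)
    (hf : ∀ t, {i | f i t ∈ range ((↑) : ℤ → ℝ)}.Subsingleton) (m : ℤ) :
    ∃ t, ∀ᶠ s in 𝓝[>] t, (∀ i, f i s ∉ range ((↑) : ℤ → ℝ)) ∧ ∑ i, ⌊f i s⌋ = m := by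
  have hcont (i : κ) : Continuous (f i) := (f i).continuous
  obtain ⟨t, hge, hle⟩ : ∃ t, m ≤ ∑ i, ⌊f i t⌋ ∧ ∑ i, ⌈f i t⌉ ≤ m - 1 + Fintype.card κ := by
    by_contra! hcover
    obtain ⟨t, -, hlt, hgt⟩ := isPreconnected_univ _ _ (isOpen_setOf_sum_floor_lt hcont m)
      (isOpen_setOf_lt_sum_ceil hcont (m - 1 + Fintype.card κ))
      (fun t _ => (lt_or_ge _ m).imp_right (hcover t))
      ((univ_inter _).symm ▸ exists_sum_floor_lt (fun i => (f i).tendsto_atBot) m)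
      ((univ_inter _).symm ▸ exists_lt_sum_ceil (fun i => (f i).tendsto_atTop) _)
    have hceil : ∑ i, ⌈f i t⌉ ≤ ∑ i, ⌊f i t⌋ + Fintype.card κ :=
      calc ∑ i, ⌈f i t⌉ ≤ ∑ i, (⌊f i t⌋ + 1) :=
            Finset.sum_le_sum fun i _ => Int.ceil_le_floor_add_one _
        _ = ∑ i, ⌊f i t⌋ + Fintype.card κ := by simp [Finset.sum_add_distrib]
    change ∑ i, ⌊f i t⌋ < m at hlt
    change m - 1 + Fintype.card κ < ∑ i, ⌈f i t⌉ at hgt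
    lia
  have hfloor : ∑ i, ⌊f i t⌋ = m := by
    have := sum_floor_add_card_le_sum_ceil_add_one (hf t)
    lia
  have hright (i : κ) : Tendsto (f i) (𝓝[>] t) (𝓝[>] (f i t)) :=
    (hcont i).continuousWithinAt.tendsto_nhdsWithin fun s hs => (f i).strictMono hs
  refine ⟨t, ?_⟩
  filter_upwards [eventually_all.2 fun i => (hright i).eventually (eventually_nhdsGT_floor_eq _)]
    with s hs
  refine ⟨fun i => (hs i).1, ?_⟩
  rw [← hfloor]
  exact Finset.sum_congr rfl fun i _ => (hs i).2

end UnitJumps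

section RegionBound

lemma height_smul_add_smul (b : ℝ × ℝ) (v e u : ℤ × ℤ) (σ t : ℝ) :
    height b v (σ • intVec e + t • intVec u) =
      t * (wedge v u : ℤ) + (σ * (wedge v e : ℤ) - wedge (intVec v) b) := by
  simp only [height, map_sub, map_add, map_smul, wedge_intVec, smul_eq_mul]
  ring

lemma fin_eq_and_eq_zero_of_eq_add_mul {n : ℕ} {a a' : Fin n} {k : ℤ}
    (h : ((a : ℕ) : ℤ) = (a' : ℕ) + n * k) : a = a' ∧ k = 0 := by
  have haa : a = a' := by
    have hmod := congrArg (· % (n : ℤ)) h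
    simp only [Int.add_mul_emod_self_left] at hmod
    norm_cast at hmod
    rwa [Nat.mod_eq_of_lt a.2, Nat.mod_eq_of_lt a'.2, Fin.val_inj] at hmod
  subst haa
  exact ⟨rfl, by simpa [a.pos.ne'] using h⟩

variable {ι : Type*} {b : ι → ℝ × ℝ} {v : ι → ℤ × ℤ} {u : ℤ × ℤ}

lemma countable_setOf_exists_ne_mem_geodesic [Countable ι] (hprim : ∀ i, IsPrimitive (v i))
    (hinj : Function.Injective fun i => geodesic (b i) (v i)) :
    {x | ∃ i j, i ≠ j ∧
      torusProj x ∈ geodesic (b i) (v i) ∧ torusProj x ∈ geodesic (b j) (v j)}.Countable := by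
  simp only [ofPred_exists]
  refine countable_iUnion fun i => countable_iUnion fun j => ?_
  by_cases hij : i = j
  · simp [hij]
  · exact (countable_setOf_mem_geodesic_inter (hprim i) (hprim j) (hinj.ne hij)).mono
      fun x hx => hx.2

variable [Fintype ι]

/-- Sweeping a line parallel to `u` across the torus meets the geodesics of direction `u` one at
a time. -/
lemma exists_eventually_sum_pattern_parallel (hprim : ∀ i, IsPrimitive (v i))
    (hinj : Function.Injective fun i => geodesic (b i) (v i)) [Nonempty {i // v i = u}]
    {e : ℤ × ℤ} (he : wedge u e = 1) (a : ℤ) :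
    ∃ s : ℝ, ∀ᶠ σ in 𝓝[>] s, ∀ t : ℝ,
      (∀ i, v i = u → torusProj (σ • intVec e + t • intVec u) ∉ geodesic (b i) (v i)) ∧
      ∑ i : {i // v i = u}, pattern b v (σ • intVec e + t • intVec u) i = a := by
  let f : {i // v i = u} → ℝ ≃o ℝ := fun i => OrderIso.addRight (-wedge (intVec u) (b i))
  have hf (i : {i // v i = u}) (σ t : ℝ) :
      height (b i) (v i) (σ • intVec e + t • intVec u) = f i σ := by
    rw [height_smul_add_smul, i.2, he, wedge_self]
    simp [f, sub_eq_add_neg]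
  have mem_iff (i : {i // v i = u}) (σ t : ℝ) :
      torusProj (σ • intVec e + t • intVec u) ∈ geodesic (b i) (v i) ↔
        f i σ ∈ range ((↑) : ℤ → ℝ) := by
    rw [torusProj_mem_geodesic_iff (hprim i), hf]
  have hsimple (σ : ℝ) : {i | f i σ ∈ range ((↑) : ℤ → ℝ)}.Subsingleton := fun i hi j hj =>
    Subtype.ext <| hinj <| geodesic_eq_of_parallel_of_mem (Or.inl (i.2.trans j.2.symm))
      ((mem_iff i σ 0).2 hi) ((mem_iff j σ 0).2 hj)
  obtain ⟨s, hs⟩ := exists_eventually_sum_floor_eq f hsimple a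
  refine ⟨s, hs.mono fun σ hσ t => ⟨fun i hi => ?_, ?_⟩⟩
  · exact mt (mem_iff ⟨i, hi⟩ σ t).1 (hσ.1 ⟨i, hi⟩)
  · simpa only [pattern, hf] using hσ.2

lemma exists_sum_pattern_transverse (hprim : ∀ i, IsPrimitive (v i))
    (hpos : ∀ i, v i ≠ u → 0 < wedge (v i) u) [Nonempty {i // v i ≠ u}] {e : ℤ × ℤ} {σ : ℝ}
    (hσ : ∀ t : ℝ, {i | torusProj (σ • intVec e + t • intVec u) ∈
      geodesic (b i) (v i)}.Subsingleton) (m : ℤ) :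
    ∃ t : ℝ,
      (∀ i, v i ≠ u → torusProj (σ • intVec e + t • intVec u) ∉ geodesic (b i) (v i)) ∧
      ∑ i : {i // v i ≠ u}, pattern b v (σ • intVec e + t • intVec u) i = m := by
  let f : {i // v i ≠ u} → ℝ ≃o ℝ := fun i =>
    (OrderIso.mulRight₀ ((wedge (v i) u : ℤ) : ℝ) (Int.cast_pos.2 (hpos i i.2))).trans
      (OrderIso.addRight (σ * (wedge (v i) e : ℤ) - wedge (intVec (v i)) (b i)))
  have hf (i : {i // v i ≠ u}) (t : ℝ) :
      height (b i) (v i) (σ • intVec e + t • intVec u) = f i t :=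
    height_smul_add_smul _ _ _ _ _ _
  have mem_iff (i : {i // v i ≠ u}) (t : ℝ) :
      torusProj (σ • intVec e + t • intVec u) ∈ geodesic (b i) (v i) ↔
        f i t ∈ range ((↑) : ℤ → ℝ) := by
    rw [torusProj_mem_geodesic_iff (hprim i), hf]
  have hsimple (t : ℝ) : {i | f i t ∈ range ((↑) : ℤ → ℝ)}.Subsingleton := fun i hi j hj =>
    Subtype.ext (hσ t ((mem_iff i t).2 hi) ((mem_iff j t).2 hj))
  obtain ⟨s, hs⟩ := exists_eventually_sum_floor_eq f hsimple m
  obtain ⟨t, ht⟩ := hs.exists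
  refine ⟨t, fun i hi => ?_, ?_⟩
  · exact mt (mem_iff ⟨i, hi⟩ t).1 (ht.1 ⟨i, hi⟩)
  · simpa only [pattern, hf] using ht.2

lemma exists_sum_pattern_eq (hprim : ∀ i, IsPrimitive (v i))
    (hinj : Function.Injective fun i => geodesic (b i) (v i)) (hu : IsPrimitive u)
    (hpos : ∀ i, v i ≠ u → 0 < wedge (v i) u) [Nonempty {i // v i = u}]
    [Nonempty {i // v i ≠ u}] (a m : ℤ) :
    ∃ x, torusProj x ∈ (⋃ i, geodesic (b i) (v i))ᶜ ∧
      ∑ i : {i // v i = u}, pattern b v x i = a ∧ ∑ i : {i // v i ≠ u}, pattern b v x i = m := by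
  obtain ⟨e, he⟩ := exists_wedge_eq_one hu
  obtain ⟨s, hs⟩ := exists_eventually_sum_pattern_parallel hprim hinj he a
  obtain ⟨s', hs', hsub⟩ := mem_nhdsGT_iff_exists_Ioo_subset.1 hs
  have hcrossings :=
    (countable_setOf_exists_ne_mem_geodesic hprim hinj).image (wedge (intVec u))
  obtain ⟨σ, hσ, hσs⟩ := (hcrossings.dense_compl ℝ).exists_between hs'
  have hgeneric (t : ℝ) : {i | torusProj (σ • intVec e + t • intVec u) ∈
      geodesic (b i) (v i)}.Subsingleton := by
    intro i hi j hj
    by_contra hij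
    refine hσ ⟨_, ⟨i, j, hij, hi, hj⟩, ?_⟩
    simp [wedge_intVec, he, wedge_self]
  obtain ⟨t, htransverse, hm⟩ := exists_sum_pattern_transverse hprim hpos hgeneric m
  obtain ⟨hparallel, ha⟩ := hsub hσs t
  refine ⟨_, ?_, ha, hm⟩
  simp only [mem_compl_iff, mem_iUnion, not_exists]
  exact fun i => (em (v i = u)).elim (hparallel i) (htransverse i)

lemma card_mul_sum_intersectionNumber_le_regionCount (hprim : ∀ i, IsPrimitive (v i))
    (hinj : Function.Injective fun i => geodesic (b i) (v i)) (hu : IsPrimitive u)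
    (hpos : ∀ i, v i ≠ u → 0 < wedge (v i) u) :
    Fintype.card {i // v i = u} * ∑ i : {i // v i ≠ u}, intersectionNumber (v i) u ≤
      regionCount (⋃ i, geodesic (b i) (v i)) := by
  rcases isEmpty_or_nonempty {i // v i = u} with _ | _
  · simp
  rcases isEmpty_or_nonempty {i // v i ≠ u} with _ | _
  · simp
  set p := Fintype.card {i // v i = u}
  set d := ∑ i : {i // v i ≠ u}, intersectionNumber (v i) u with hd
  have hdcast : (d : ℤ) = ∑ i : {i // v i ≠ u}, wedge (v i) u := by
    rw [hd, Nat.cast_sum]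
    exact Finset.sum_congr rfl fun i _ => Int.natAbs_of_nonneg (hpos i i.2).le
  choose x hx hparallel htransverse using exists_sum_pattern_eq hprim hinj hu hpos
  suffices Nat.card (Fin p × Fin d) ≤ regionCount (⋃ i, geodesic (b i) (v i)) by simpa using this
  refine natCard_le_regionCount hprim (x := fun j => x (j.1 : ℕ) (j.2 : ℕ)) (fun j => hx _ _) ?_
  rintro ⟨j, k⟩ ⟨j', k'⟩ z hz
  have hsum (q : ι → Prop) [Fintype {i // q i}] := congrArg (fun c => ∑ i : {i // q i}, c i) hz
  simp only [Pi.add_apply, Finset.sum_add_distrib, patternShift, LinearMap.pi_apply] at hsum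
  have hj := hsum (v · = u)
  have hk := hsum (v · ≠ u)
  have hcard : ∑ i : {i // v i = u}, wedge (v i) z = p * wedge u z := by
    simp [p, fun i : {i // v i = u} => i.2]
  simp only [hparallel, hcard] at hj
  obtain ⟨rfl, hz0⟩ := fin_eq_and_eq_zero_of_eq_add_mul hj
  obtain ⟨r, rfl⟩ := eq_smul_of_wedge_eq_zero hu hz0
  simp only [htransverse, map_smul, smul_eq_mul, ← Finset.mul_sum, ← hdcast] at hk
  rw [mul_comm r] at hk
  rw [(fin_eq_and_eq_zero_of_eq_add_mul hk).1]

end RegionBound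

section ParallelClass

variable {ι : Type*} [Fintype ι]

open Classical in
/-- The indices of the geodesics of an arrangement that are parallel to a given class `u`. -/
def parallelClass (v : ι → ℤ × ℤ) (u : ℤ × ℤ) : Finset ι := {i | Parallel (v i) u}

lemma mem_parallelClass {v : ι → ℤ × ℤ} {u : ℤ × ℤ} {i : ι} :
    i ∈ parallelClass v u ↔ Parallel (v i) u := by
  simp [parallelClass]

lemma exists_eq_or_wedge_pos {v u : ℤ × ℤ} (hv : IsPrimitive v) (hu : IsPrimitive u) :
    ∃ w, (w = v ∨ w = -v) ∧ (w = u ∨ 0 < wedge w u) := by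
  by_cases hpar : Parallel v u
  · refine ⟨u, ?_, Or.inl rfl⟩
    rcases hpar with rfl | rfl <;> simp
  · rcases lt_or_gt_of_ne (mt (parallel_iff_wedge_eq_zero hv hu).2 hpar) with hneg | hpos
    · exact ⟨-v, Or.inr rfl, Or.inr (by rwa [wedge_neg_left, neg_pos])⟩
    · exact ⟨v, Or.inl rfl, Or.inr hpos⟩

theorem card_parallelClass_mul_sum_intersectionNumber_le_regionCount {b : ι → ℝ × ℝ}
    {v : ι → ℤ × ℤ} {u : ℤ × ℤ} (hprim : ∀ i, IsPrimitive (v i))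
    (hinj : Function.Injective fun i => geodesic (b i) (v i)) (hu : IsPrimitive u) :
    (parallelClass v u).card * ∑ i, intersectionNumber (v i) u ≤
      regionCount (⋃ i, geodesic (b i) (v i)) := by
  classical
  choose w hw hwu using fun i => exists_eq_or_wedge_pos (hprim i) hu
  have hprimw (i : ι) : IsPrimitive (w i) := by
    rcases hw i with h | h <;> rw [h]
    exacts [hprim i, isPrimitive_neg (hprim i)]
  have hgeodesic (i : ι) : geodesic (b i) (w i) = geodesic (b i) (v i) := by
    rcases hw i with h | h <;> rw [h]
    exact geodesic_neg _ _
  have hnumber (i : ι) : intersectionNumber (w i) u = intersectionNumber (v i) u := by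
    rcases hw i with h | h <;> rw [h]
    exact intersectionNumber_neg_left _ _
  have hzero (i : ι) : w i = u ↔ intersectionNumber (v i) u = 0 := by
    rw [← hnumber, intersectionNumber, Int.natAbs_eq_zero]
    exact ⟨fun h => by rw [h, wedge_self], fun h => (hwu i).resolve_right h.not_gt⟩
  have hcard : Fintype.card {i // w i = u} = (parallelClass v u).card := by
    simp only [Fintype.card_subtype, parallelClass, hzero,
      intersectionNumber_eq_zero_iff (hprim _) hu]
  have hsum : ∑ i : {i // w i ≠ u}, intersectionNumber (w i) u =
      ∑ i, intersectionNumber (v i) u := by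
    rw [← Fintype.sum_subtype_add_sum_subtype (w · = u),
      Fintype.sum_eq_zero _ fun i : {i // w i = u} => (hzero i).1 i.2, zero_add]
    simp only [hnumber]
  have hinjw : Function.Injective fun i => geodesic (b i) (w i) := by
    simpa only [hgeodesic] using hinj
  have hbound := card_mul_sum_intersectionNumber_le_regionCount hprimw hinjw hu
    fun i => (hwu i).resolve_left
  rwa [hcard, hsum, iUnion_congr hgeodesic] at hbound

lemma card_le_card_parallelClass_add_sum_intersectionNumber {v : ι → ℤ × ℤ} {u : ℤ × ℤ}
    (hprim : ∀ i, IsPrimitive (v i)) (hu : IsPrimitive u) :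
    Fintype.card ι ≤ (parallelClass v u).card + ∑ i, intersectionNumber (v i) u := by
  classical
  have hcompl : (parallelClass v u)ᶜ.card ≤ ∑ i, intersectionNumber (v i) u :=
    calc (parallelClass v u)ᶜ.card = ∑ i ∈ (parallelClass v u)ᶜ, 1 := Finset.card_eq_sum_ones _
      _ ≤ ∑ i ∈ (parallelClass v u)ᶜ, intersectionNumber (v i) u := by
        refine Finset.sum_le_sum fun i hi => Nat.one_le_iff_ne_zero.2 ?_
        rwa [Ne, intersectionNumber_eq_zero_iff (hprim i) hu, ← mem_parallelClass,
          ← Finset.mem_compl]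
      _ ≤ ∑ i, intersectionNumber (v i) u := Finset.sum_le_univ_sum_of_nonneg fun _ => zero_le
  rw [← Finset.card_add_card_compl (parallelClass v u)]
  gcongr

lemma parallel_of_mem_parallelClass {v : ι → ℤ × ℤ} {u : ℤ × ℤ} {i j : ι}
    (hi : i ∈ parallelClass v u) (hj : j ∈ parallelClass v u) : Parallel (v i) (v j) := by
  rw [mem_parallelClass] at hi hj
  rcases hi with hi | hi <;> rcases hj with hj | hj <;> simp [Parallel, hi, hj]

end ParallelClass

section LargeClass

lemma card_le_of_forall_intersectionNumber_le {p q : ℤ × ℤ} (hpq : intersectionNumber p q ≠ 0)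
    {s : Finset (ℤ × ℤ)} {N : ℕ}
    (hs : ∀ z ∈ s, intersectionNumber z p ≤ N ∧ intersectionNumber z q ≤ N) :
    s.card ≤ (2 * N + 1) ^ 2 := by
  have mem_Icc {x z : ℤ × ℤ} (h : intersectionNumber z x ≤ N) :
      wedge x z ∈ Finset.Icc (-N : ℤ) N := by
    rw [intersectionNumber_comm, intersectionNumber] at h
    rw [Finset.mem_Icc]
    lia
  calc s.card ≤ (Finset.Icc (-N : ℤ) N ×ˢ Finset.Icc (-N : ℤ) N).card := by
        refine Finset.card_le_card_of_injOn (fun z => (wedge p z, wedge q z)) (fun z hz => ?_) ?_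
        · exact Finset.mem_product.2 ⟨mem_Icc (hs z hz).1, mem_Icc (hs z hz).2⟩
        · intro x _ y _ hxy
          simp only [Prod.mk.injEq] at hxy
          exact eq_of_wedge_eq_wedge (Int.natAbs_ne_zero.1 hpq) hxy.1 hxy.2
    _ = (2 * N + 1) ^ 2 := by
        rw [Finset.card_product, Int.card_Icc, sq,
          show ((N : ℤ) + 1 - -N).toNat = 2 * N + 1 by lia]

variable {ι : Type*} [Fintype ι] {v : ι → ℤ × ℤ}

lemma card_filter_intersectionNumber_le {p q : ℤ × ℤ} (hpq : intersectionNumber p q ≠ 0) {K : ℕ}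
    (hK : ∀ i, (parallelClass v (v i)).card ≤ K) (N : ℕ) :
    ({i | intersectionNumber (v i) p ≤ N ∧ intersectionNumber (v i) q ≤ N} : Finset ι).card ≤
      K * (2 * N + 1) ^ 2 := by
  classical
  refine (Finset.card_le_mul_card_image (f := v) _ K fun w hw => ?_).trans
    (Nat.mul_le_mul_left K (card_le_of_forall_intersectionNumber_le hpq fun z hz => ?_))
  · obtain ⟨i, -, rfl⟩ := Finset.mem_image.1 hw
    refine (Finset.card_le_card fun j hj => ?_).trans (hK i)
    exact mem_parallelClass.2 (Or.inl (Finset.mem_filter.1 hj).2)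
  · obtain ⟨i, hi, rfl⟩ := Finset.mem_image.1 hz
    exact (Finset.mem_filter.1 hi).2

lemma succ_mul_card_filter_lt_le_sum (d : ι → ℕ) (N : ℕ) :
    (N + 1) * ({i | N < d i} : Finset ι).card ≤ ∑ i, d i := by
  rw [mul_comm, ← smul_eq_mul]
  exact (Finset.card_nsmul_le_sum _ d _ fun i hi => (Finset.mem_filter.1 hi).2).trans
    (Finset.sum_le_univ_sum_of_nonneg fun _ => zero_le)

lemma succ_mul_card_le_sum_intersectionNumber {p q : ℤ × ℤ} (hpq : intersectionNumber p q ≠ 0)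
    {K : ℕ} (hK : ∀ i, (parallelClass v (v i)).card ≤ K) (N : ℕ) :
    (N + 1) * Fintype.card ι ≤ ∑ i, intersectionNumber (v i) p +
      ∑ i, intersectionNumber (v i) q + (N + 1) * (K * (2 * N + 1) ^ 2) := by
  classical
  let P : Finset ι := {i | N < intersectionNumber (v i) p}
  let Q : Finset ι := {i | N < intersectionNumber (v i) q}
  let S : Finset ι := {i | intersectionNumber (v i) p ≤ N ∧ intersectionNumber (v i) q ≤ N}
  have hcover : Finset.univ = P ∪ Q ∪ S := by
    ext i
    simp only [P, Q, S, Finset.mem_univ, Finset.mem_union, Finset.mem_filter, true_and, true_iff]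
    lia
  calc (N + 1) * Fintype.card ι ≤ (N + 1) * (P.card + Q.card + S.card) := by
        rw [← Finset.card_univ, hcover]
        gcongr
        exact (Finset.card_union_le _ _).trans (Nat.add_le_add_right (Finset.card_union_le _ _) _)
    _ = (N + 1) * P.card + (N + 1) * Q.card + (N + 1) * S.card := by ring
    _ ≤ _ := by
        gcongr
        exacts [succ_mul_card_filter_lt_le_sum _ N, succ_mul_card_filter_lt_le_sum _ N,
          card_filter_intersectionNumber_le hpq hK N]

variable {F y : ℝ}

lemma card_mul_sub_le (hprim : ∀ i, IsPrimitive (v i)) {i : ι}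
    (hF : ((parallelClass v (v i)).card * ∑ j, intersectionNumber (v j) (v i) : ℕ) ≤ F) :
    ((parallelClass v (v i)).card : ℝ) * (Fintype.card ι - (parallelClass v (v i)).card) ≤ F := by
  have hsum : (Fintype.card ι : ℝ) ≤
      (parallelClass v (v i)).card + ∑ j, intersectionNumber (v j) (v i) := by
    exact_mod_cast card_le_card_parallelClass_add_sum_intersectionNumber hprim (hprim i)
  refine le_trans ?_ hF
  push_cast at hsum ⊢
  gcongr
  linarith

lemma sum_intersectionNumber_le {i : ι}
    (hF : ((parallelClass v (v i)).card * ∑ j, intersectionNumber (v j) (v i) : ℕ) ≤ F) :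
    (∑ j, intersectionNumber (v j) (v i) : ℕ) ≤ F := by
  have hpos : 0 < (parallelClass v (v i)).card :=
    Finset.card_pos.2 ⟨i, mem_parallelClass.2 (Or.inl rfl)⟩
  exact le_trans (by exact_mod_cast Nat.le_mul_of_pos_left _ hpos) hF

lemma card_div_two_le_mul_two_mul_floor_add_one_sq {i j : ι}
    (hij : intersectionNumber (v i) (v j) ≠ 0)
    (hi : (∑ k, intersectionNumber (v k) (v i) : ℕ) ≤ F)
    (hj : (∑ k, intersectionNumber (v k) (v j) : ℕ) ≤ F)
    (hsmall : F ≤ Fintype.card ι * y / 16) {K : ℕ}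
    (hK : ∀ k, (parallelClass v (v k)).card ≤ K) :
    (Fintype.card ι : ℝ) / 2 ≤ K * (2 * ⌊y / 4⌋₊ + 1) ^ 2 := by
  set N := ⌊y / 4⌋₊
  have hN : y / 4 < N + 1 := Nat.lt_floor_add_one _
  have hcount : ((N : ℝ) + 1) * Fintype.card ι ≤ F + F + (N + 1) * (K * (2 * N + 1) ^ 2) := by
    refine le_trans ?_ (add_le_add_left (add_le_add hi hj) _)
    exact_mod_cast succ_mul_card_le_sum_intersectionNumber hij hK N
  have hFN : F + F ≤ (N + 1) * (Fintype.card ι / 2) :=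
    calc F + F ≤ y / 4 * (Fintype.card ι / 2) := by linarith
      _ ≤ (N + 1) * (Fintype.card ι / 2) := by gcongr
  exact le_of_mul_le_mul_left (by linarith) (by positivity : (0 : ℝ) < N + 1)

lemma mul_two_mul_floor_add_one_sq_le {n μ : ℝ} (hy : 1 ≤ y) (hyn : y ^ 5 = n) (hμ : μ ≤ y / 8) :
    μ * (2 * ⌊y / 4⌋₊ + 1) ^ 2 ≤ 9 / 32 * n := by
  have hN : (⌊y / 4⌋₊ : ℝ) ≤ y / 4 := Nat.floor_le (by positivity)
  calc μ * (2 * ⌊y / 4⌋₊ + 1) ^ 2 ≤ y / 8 * (3 / 2 * y) ^ 2 := by gcongr; linarith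
    _ = 9 / 32 * y ^ 3 := by ring
    _ ≤ 9 / 32 * y ^ 5 := by gcongr 9 / 32 * ?_; exact pow_le_pow_right₀ hy (by norm_num)
    _ = 9 / 32 * n := by rw [hyn]

lemma card_le_two_mul_of_forall_card_parallelClass_le (hprim : ∀ i, IsPrimitive (v i))
    (hF : ∀ i, ((parallelClass v (v i)).card * ∑ j, intersectionNumber (v j) (v i) : ℕ) ≤ F)
    (hy : 1 ≤ y) (hyn : y ^ 5 = Fintype.card ι) (hsmall : F ≤ Fintype.card ι * y / 16) {i : ι}
    (hmax : ∀ j, (parallelClass v (v j)).card ≤ (parallelClass v (v i)).card) :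
    Fintype.card ι ≤ 2 * (parallelClass v (v i)).card := by
  by_contra! hlt
  obtain ⟨j, hj⟩ : ∃ j, j ∉ parallelClass v (v i) := by
    by_contra! hall
    rw [Finset.eq_univ_iff_forall.2 hall, Finset.card_univ] at hlt
    lia
  have hji : intersectionNumber (v j) (v i) ≠ 0 := by
    rwa [Ne, intersectionNumber_eq_zero_iff (hprim j) (hprim i), ← mem_parallelClass]
  have hn : (0 : ℝ) < Fintype.card ι := by rw [← hyn]; positivity
  have hμF := card_mul_sub_le hprim (hF i)
  have hlower := card_div_two_le_mul_two_mul_floor_add_one_sq hji (sum_intersectionNumber_le (hF j))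
    (sum_intersectionNumber_le (hF i)) hsmall hmax
  set n := Fintype.card ι
  set μ := (parallelClass v (v i)).card
  have hlt' : 2 * (μ : ℝ) < n := by exact_mod_cast hlt
  have hμ : (μ : ℝ) ≤ y / 8 := by
    refine le_of_mul_le_mul_right ?_ (half_pos hn)
    calc (μ : ℝ) * (n / 2) ≤ μ * (n - μ) := by gcongr; linarith
      _ ≤ y / 8 * (n / 2) := by linarith
  linarith [mul_two_mul_floor_add_one_sq_le hy hyn hμ]

lemma sub_div_sub_one_le {n μ : ℝ} (hy : 1 ≤ y) (hyn : y ^ 5 = n) (hsmall : F ≤ n * y / 16)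
    (hμ : μ ≤ n) (hhalf : n ≤ 2 * μ) (hF : μ * (n - μ) ≤ F) : n - F / n - 1 ≤ μ := by
  have hn : 0 < n := by rw [← hyn]; positivity
  have hsub : n - μ ≤ y := by
    refine le_of_mul_le_mul_left ?_ (half_pos hn)
    calc n / 2 * (n - μ) ≤ μ * (n - μ) := by gcongr; linarith
      _ ≤ n / 2 * y := by nlinarith
  have hsq : (n - μ) ^ 2 ≤ n :=
    calc (n - μ) ^ 2 ≤ y ^ 2 := by gcongr
      _ ≤ y ^ 5 := pow_le_pow_right₀ hy (by norm_num)
      _ = n := hyn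
  have hdiv : n - μ - 1 ≤ F / n := (le_div_iff₀ hn).2 (by linarith)
  linarith

theorem exists_sub_div_sub_one_le_card_parallelClass [Nonempty ι]
    (hprim : ∀ i, IsPrimitive (v i))
    (hF : ∀ i, ((parallelClass v (v i)).card * ∑ j, intersectionNumber (v j) (v i) : ℕ) ≤ F)
    (hsmall : F ≤ 1 / 16 * (Fintype.card ι : ℝ) ^ ((6 : ℝ) / 5)) :
    ∃ i, Fintype.card ι - F / Fintype.card ι - 1 ≤ (parallelClass v (v i)).card := by
  obtain ⟨i, hmax⟩ := Finite.exists_max fun i => (parallelClass v (v i)).card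
  have hn : (1 : ℝ) ≤ Fintype.card ι := by exact_mod_cast Fintype.card_pos
  set y := (Fintype.card ι : ℝ) ^ ((1 : ℝ) / 5) with hydef
  have hy : 1 ≤ y := Real.one_le_rpow hn (by norm_num)
  have hyn : y ^ 5 = Fintype.card ι := by
    rw [hydef, ← Real.rpow_natCast, ← Real.rpow_mul (by positivity)]
    norm_num
  have hsmall' : F ≤ Fintype.card ι * y / 16 := by
    rw [show (6 : ℝ) / 5 = 1 + 1 / 5 by norm_num, Real.rpow_add (by positivity),
      Real.rpow_one] at hsmall
    linarith
  refine ⟨i, sub_div_sub_one_le hy hyn hsmall' ?_ ?_ (card_mul_sub_le hprim (hF i))⟩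
  · exact_mod_cast Finset.card_le_univ _
  · exact_mod_cast card_le_two_mul_of_forall_card_parallelClass_le hprim hF hy hyn hsmall' hmax

end LargeClass

end TorusGeodesic

/-- There is `c > 0` such that if `f ≤ c·n^{6/5}`, then the maximal number `m`
of pairwise parallel geodesics satisfies `m ≥ n - f/n + O(1)`. -/
theorem stmt10 :
    ∃ c > (0 : ℝ), ∃ C : ℝ, ∀ (n : ℕ) (b : Fin n → ℝ × ℝ) (v : Fin n → ℤ × ℤ),
      IsArrangement b v →
      (regionCount (⋃ i, geodesic (b i) (v i)) : ℝ) ≤ c * (n : ℝ) ^ ((6 : ℝ) / 5) →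
      ∀ m : ℕ,
        m = sSup {k : ℕ | ∃ S : Finset (Fin n), S.card = k ∧
          ∀ i ∈ S, ∀ j ∈ S, Parallel (v i) (v j)} →
        (m : ℝ) ≥ (n : ℝ) - (regionCount (⋃ i, geodesic (b i) (v i)) : ℝ) / (n : ℝ) - C := by
  refine ⟨1 / 16, by norm_num, 1, ?_⟩
  rintro n b v ⟨hprim, hinj⟩ hsmall m rfl
  rcases Nat.eq_zero_or_pos n with rfl | hn
  · exact (by norm_num : (_ : ℝ) ≤ 0).trans (Nat.cast_nonneg _)
  have : NeZero n := ⟨hn.ne'⟩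
  have hregions (i : Fin n) := Nat.cast_le (α := ℝ).2
    (TorusGeodesic.card_parallelClass_mul_sum_intersectionNumber_le_regionCount hprim hinj
      (hprim i))
  obtain ⟨i, hi⟩ := TorusGeodesic.exists_sub_div_sub_one_le_card_parallelClass hprim hregions
    (by simpa using hsmall)
  rw [Fintype.card_fin] at hi
  refine hi.trans (Nat.cast_le.2 (le_csSup ⟨n, ?_⟩ ⟨TorusGeodesic.parallelClass v (v i), rfl, ?_⟩))
  · rintro - ⟨S, rfl, -⟩
    exact S.card_le_univ.trans_eq (Fintype.card_fin n)
  · exact fun j hj k hk => TorusGeodesic.parallel_of_mem_parallelClass hj hk
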